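/- Let P_X be a pmf on 𝒳 = {0,…,m_x} with full support that is symmetric and unimodal around ⌊m_x/2⌋, i.e., P_X(⌊m_x/2⌋) ≥ P_X(⌊m_x/2⌋+1) = P_X(⌊m_x/2⌋−1) ≥ P_X(⌊m_x/2⌋+2) = P_X(⌊m_x/2⌋−2) ≥ …. Let θ* be the minimizer of θ ↦ I(S − X; X) (X ~ P_X, S ~ θ independent) over pmfs θ on 𝒮 = {0,…,m_s}, and set m* = ⌊m_s/2⌋. Then θ* is almost symmetric and unimodal around m*: if m_s is even, θ*(m*) ≥ θ*(m*+1) = θ*(m*−1) ≥ θ*(m*+2) = θ*(m*−2) ≥ …, and if m_s is odd, θ*(m*) = θ*(m*+1) ≥ θ*(m*−1) = θ*(m*+2) ≥ θ*(m*−2) = …. -/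

import Mathlib

open Finset
open scoped Classical

namespace SmartMeter

/-! ### Basic information measures for finitely supported distributions.
All entropies and mutual informations are in bits (base-2 logarithms). -/

/-- Probability that the random variable `Z` takes the value `z` under the pmf `p`. -/
noncomputable def pr {Ω α : Type*} [Fintype Ω] [DecidableEq α]
    (p : Ω → ℝ) (Z : Ω → α) (z : α) : ℝ :=
  ∑ ω ∈ Finset.univ.filter (fun ω => Z ω = z), p ω

/-- Shannon entropy (in bits) of the random variable `Z` under the pmf `p`. -/
noncomputable def ent {Ω α : Type*} [Fintype Ω] [DecidableEq α]
    (p : Ω → ℝ) (Z : Ω → α) : ℝ :=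
  -∑ z ∈ Finset.univ.image Z, pr p Z z * Real.logb 2 (pr p Z z)

/-- Mutual information `I(A; B)`. -/
noncomputable def mutInfo {Ω α β : Type*} [Fintype Ω] [DecidableEq α] [DecidableEq β]
    (p : Ω → ℝ) (A : Ω → α) (B : Ω → β) : ℝ :=
  ent p A + ent p B - ent p (fun ω => (A ω, B ω))

/-- Conditional entropy `H(A | C)`. -/
noncomputable def condEnt {Ω α γ : Type*} [Fintype Ω] [DecidableEq α] [DecidableEq γ]
    (p : Ω → ℝ) (A : Ω → α) (C : Ω → γ) : ℝ :=
  ent p (fun ω => (A ω, C ω)) - ent p C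

/-- Conditional mutual information `I(A; B | C)`. -/
noncomputable def condMutInfo {Ω α β γ : Type*} [Fintype Ω] [DecidableEq α] [DecidableEq β]
    [DecidableEq γ] (p : Ω → ℝ) (A : Ω → α) (B : Ω → β) (C : Ω → γ) : ℝ :=
  ent p (fun ω => (A ω, C ω)) + ent p (fun ω => (B ω, C ω))
    - ent p (fun ω => (A ω, B ω, C ω)) - ent p C

/-- `p` is a probability mass function on the finite type `Ω`. -/
def IsPMF {Ω : Type*} [Fintype Ω] (p : Ω → ℝ) : Prop :=
  (∀ ω, 0 ≤ p ω) ∧ ∑ ω, p ω = 1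

/-- Extension of a pmf on `{0, …, n}` to an integer-indexed function (zero out of range). -/
noncomputable def extZ {n : ℕ} (f : Fin (n + 1) → ℝ) (k : ℤ) : ℝ :=
  if h : 0 ≤ k ∧ k ≤ (n : ℤ) then f ⟨k.toNat, by omega⟩ else 0

/-! ### The single-letter quantity `J*` -/

/-- `I(S - X; X)` for independent `X ~ PX` on `{0,…,mx}` and `S ~ θ` on `{0,…,ms}`. -/
noncomputable def iidMI (mx ms : ℕ) (PX : Fin (mx + 1) → ℝ) (θ : Fin (ms + 1) → ℝ) : ℝ :=
  mutInfo (fun ω : Fin (mx + 1) × Fin (ms + 1) => PX ω.1 * θ ω.2)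
    (fun ω => ((ω.2 : ℕ) : ℤ) - ((ω.1 : ℕ) : ℤ)) (fun ω => ω.1)

/-- `J* = min over pmfs θ on 𝒮 of I(S - X; X)`. -/
noncomputable def Jstar (mx ms : ℕ) (PX : Fin (mx + 1) → ℝ) : ℝ :=
  sInf {r : ℝ | ∃ θ : Fin (ms + 1) → ℝ, IsPMF θ ∧ iidMI mx ms PX θ = r}

/-! ### The structured policy `b*` -/

/-- `ξ(w) = Σ_{(x,s) : s - x = w} PX(x) θ(s)`, the pmf of `W = S - X`. -/
noncomputable def xiOf (mx ms : ℕ) (PX : Fin (mx + 1) → ℝ) (θ : Fin (ms + 1) → ℝ)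
    (w : ℤ) : ℝ :=
  ∑ x : Fin (mx + 1), ∑ s : Fin (ms + 1),
    if ((s : ℕ) : ℤ) - ((x : ℕ) : ℤ) = w then PX x * θ s else 0

/-- The structured policy with respect to `(θ, ξ)`:
`b(y|w) = PX(y) θ(y + w) / ξ(w)` for `y ∈ 𝒳 ∩ 𝒴₀(w)` (when `ξ(w) > 0`), else `0`. -/
noncomputable def bstar (mx my ms : ℕ) (PX : Fin (mx + 1) → ℝ) (θ : Fin (ms + 1) → ℝ)
    (w : ℤ) (y : Fin (my + 1)) : ℝ :=
  if xiOf mx ms PX θ w = 0 then 0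
  else extZ PX ((y : ℕ) : ℤ) * extZ θ (((y : ℕ) : ℤ) + w) / xiOf mx ms PX θ w

/-! ### Trajectory spaces, policies and induced joint laws.
Time is indexed from `0`; `ω = (s₁, x, y)` records the initial battery state `S₁ = ω.1`,
the demands `X_{t+1} = ω.2.1 t` and the outputs `Y_{t+1} = ω.2.2 t` for `t = 0, …, T-1`. -/

/-- Trajectories of horizon `T`. -/
abbrev Traj (mx my ms T : ℕ) :=
  Fin (ms + 1) × (Fin T → Fin (mx + 1)) × (Fin T → Fin (my + 1))

variable {mx my ms T : ℕ}

/-- Demand at (0-based) time `t`, as an integer (junk value `0` for `t ≥ T`). -/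
def Xat (ω : Traj mx my ms T) (t : ℕ) : ℤ :=
  if h : t < T then ((ω.2.1 ⟨t, h⟩ : ℕ) : ℤ) else 0

/-- Output at (0-based) time `t`, as an integer (junk value `0` for `t ≥ T`). -/
def Yat (ω : Traj mx my ms T) (t : ℕ) : ℤ :=
  if h : t < T then ((ω.2.2 ⟨t, h⟩ : ℕ) : ℤ) else 0

/-- Battery state at (0-based) time `t`: `S_{t+1} = S_t + Y_t - X_t`, `Sat ω 0 = S₁`. -/
def Sat (ω : Traj mx my ms T) (t : ℕ) : ℤ :=
  ((ω.1 : ℕ) : ℤ) + ∑ i ∈ Finset.range t, (Yat ω i - Xat ω i)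

/-- `W_t = S_t - X_t`. -/
def Wat (ω : Traj mx my ms T) (t : ℕ) : ℤ := Sat ω t - Xat ω t

/-- A general causal (class `Q_A`) randomized battery policy:
`q_t(y_t | x^t, s^t, y^{t-1})`; since `s^t` is determined by `(s₁, x^{t-1}, y^{t-1})`,
the policy is a function of `(x^t, s₁, y^{t-1})`. -/
def PolicyA (mx my ms : ℕ) : Type :=
  (t : ℕ) → (Fin (t + 1) → Fin (mx + 1)) → Fin (ms + 1) → (Fin t → Fin (my + 1)) →
    Fin (my + 1) → ℝ

/-- A class-`Q_B` policy: `q_t(y_t | x_t, s_t, y^{t-1})`. -/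
def PolicyB (mx my ms : ℕ) : Type :=
  (t : ℕ) → Fin (mx + 1) → ℤ → (Fin t → Fin (my + 1)) → Fin (my + 1) → ℝ

/-- The battery state `S_t` computed from `s₁` and the history `(x^t, y^{t-1})`. -/
def hstate {t : ℕ} (s1 : Fin (ms + 1)) (x : Fin (t + 1) → Fin (mx + 1))
    (y : Fin t → Fin (my + 1)) : ℤ :=
  ((s1 : ℕ) : ℤ) + ∑ i : Fin t, (((y i : ℕ) : ℤ) - ((x i.castSucc : ℕ) : ℤ))

/-- Each `q_t(· | x^t, s^t, y^{t-1})` is a pmf on `𝒴`. -/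
def CondPMFA (q : PolicyA mx my ms) : Prop :=
  ∀ (t : ℕ) (x : Fin (t + 1) → Fin (mx + 1)) (s1 : Fin (ms + 1)) (y : Fin t → Fin (my + 1)),
    (∀ yt, 0 ≤ q t x s1 y yt) ∧ ∑ yt, q t x s1 y yt = 1

/-- Feasibility of a class-`Q_A` policy: conditional pmfs supported on
`𝒴₀(s_t - x_t) = {y ∈ 𝒴 : s_t - x_t + y ∈ 𝒮}`. -/
def FeasibleA (q : PolicyA mx my ms) : Prop :=
  CondPMFA q ∧
  ∀ (t : ℕ) (x : Fin (t + 1) → Fin (mx + 1)) (s1 : Fin (ms + 1)) (y : Fin t → Fin (my + 1)),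
    ∀ yt, q t x s1 y yt ≠ 0 →
      0 ≤ hstate s1 x y - ((x (Fin.last t) : ℕ) : ℤ) + ((yt : ℕ) : ℤ) ∧
      hstate s1 x y - ((x (Fin.last t) : ℕ) : ℤ) + ((yt : ℕ) : ℤ) ≤ (ms : ℤ)

/-- Each `q_t(· | x_t, s_t, y^{t-1})` is a pmf on `𝒴`. -/
def CondPMFB (q : PolicyB mx my ms) : Prop :=
  ∀ (t : ℕ) (xt : Fin (mx + 1)) (s : ℤ) (y : Fin t → Fin (my + 1)),
    (∀ yt, 0 ≤ q t xt s y yt) ∧ ∑ yt, q t xt s y yt = 1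

/-- Feasibility of a class-`Q_B` policy. -/
def FeasibleB (q : PolicyB mx my ms) : Prop :=
  CondPMFB q ∧
  ∀ (t : ℕ) (xt : Fin (mx + 1)) (s : ℤ) (y : Fin t → Fin (my + 1)),
    0 ≤ s → s ≤ (ms : ℤ) →
    ∀ yt, q t xt s y yt ≠ 0 →
      0 ≤ s - ((xt : ℕ) : ℤ) + ((yt : ℕ) : ℤ) ∧
      s - ((xt : ℕ) : ℤ) + ((yt : ℕ) : ℤ) ≤ (ms : ℤ)

/-- The demand prefix `x^t = (x_0, …, x_t)` of a trajectory. -/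
def prefX (ω : Traj mx my ms T) (t : Fin T) : Fin ((t : ℕ) + 1) → Fin (mx + 1) :=
  fun i => ω.2.1 ⟨(i : ℕ), lt_of_le_of_lt (Nat.lt_succ_iff.mp i.isLt) t.isLt⟩

/-- The output prefix `y^{t-1} = (y_0, …, y_{t-1})` of a trajectory. -/
def prefY (ω : Traj mx my ms T) (t : Fin T) : Fin (t : ℕ) → Fin (my + 1) :=
  fun i => ω.2.2 ⟨(i : ℕ), i.isLt.trans t.isLt⟩

/-- Joint law on trajectories induced by i.i.d. demand `PX`, initial battery pmf `PS1`
(independent of the demand), and a class-`Q_A` policy `q`. -/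
noncomputable def jointA (PS1 : Fin (ms + 1) → ℝ) (PX : Fin (mx + 1) → ℝ)
    (q : PolicyA mx my ms) (T : ℕ) (ω : Traj mx my ms T) : ℝ :=
  PS1 ω.1 * ∏ t : Fin T,
    (PX (ω.2.1 t) * q (t : ℕ) (prefX ω t) ω.1 (prefY ω t) (ω.2.2 t))

/-- Weight of a demand trajectory under a Markov chain `(PX1, Qm)`. -/
noncomputable def markovWt (PX1 : Fin (mx + 1) → ℝ) (Qm : Fin (mx + 1) → Fin (mx + 1) → ℝ)
    {T : ℕ} (x : Fin T → Fin (mx + 1)) : ℝ :=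
  ∏ t : Fin T,
    if _h : (t : ℕ) = 0 then PX1 (x t)
    else Qm (x ⟨(t : ℕ) - 1, lt_of_le_of_lt (Nat.sub_le _ _) t.isLt⟩) (x t)

/-- Joint law on trajectories induced by Markov demand and a class-`Q_A` policy. -/
noncomputable def jointAMarkov (PS1 : Fin (ms + 1) → ℝ) (PX1 : Fin (mx + 1) → ℝ)
    (Qm : Fin (mx + 1) → Fin (mx + 1) → ℝ) (q : PolicyA mx my ms) (T : ℕ)
    (ω : Traj mx my ms T) : ℝ :=
  PS1 ω.1 * markovWt PX1 Qm ω.2.1 *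
    ∏ t : Fin T, q (t : ℕ) (prefX ω t) ω.1 (prefY ω t) (ω.2.2 t)

/-- Joint law on trajectories induced by Markov demand and a class-`Q_B` policy. -/
noncomputable def jointBMarkov (PS1 : Fin (ms + 1) → ℝ) (PX1 : Fin (mx + 1) → ℝ)
    (Qm : Fin (mx + 1) → Fin (mx + 1) → ℝ) (q : PolicyB mx my ms) (T : ℕ)
    (ω : Traj mx my ms T) : ℝ :=
  PS1 ω.1 * markovWt PX1 Qm ω.2.1 *
    ∏ t : Fin T, q (t : ℕ) (ω.2.1 t) (Sat ω (t : ℕ)) (prefY ω t) (ω.2.2 t)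

/-- The memoryless time-invariant policy `q_t(y | x, s) = b*(y | s - x)`, as a member of the
class of general causal policies. -/
noncomputable def structuredPolicyA (mx my ms : ℕ) (PX : Fin (mx + 1) → ℝ)
    (θ : Fin (ms + 1) → ℝ) : PolicyA mx my ms :=
  fun t x s1 y yt => bstar mx my ms PX θ (hstate s1 x y - ((x (Fin.last t) : ℕ) : ℤ)) yt


open Real in
lemma nml_add_le {a b : ℝ} (ha : 0 < a) (hb : 0 ≤ b) :
    negMulLog (a + b) ≤ negMulLog a - b * log a := by
  have h : log a ≤ log (a + b) := Real.log_le_log ha (by linarith)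
  unfold negMulLog
  nlinarith [mul_le_mul_of_nonneg_left h (by linarith : 0 ≤ a + b)]

open Real in
lemma nml_add_le' {a b : ℝ} (ha : 0 ≤ a) (hb : 0 ≤ b) :
    negMulLog (a + b) ≤ negMulLog a + negMulLog b := by
  rcases ha.eq_or_lt with rfl | ha
  · simp
  rcases hb.eq_or_lt with rfl | hb
  · simp
  have h : log a ≤ log (a + b) := Real.log_le_log ha (by linarith)
  have h' : log b ≤ log (a + b) := Real.log_le_log hb (by linarith)
  unfold negMulLog
  nlinarith [mul_le_mul_of_nonneg_left h ha.le, mul_le_mul_of_nonneg_left h' hb.le]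

open Real in
lemma nml_pair {a b a' b' : ℝ} (ha' : 0 ≤ a') (hb' : 0 ≤ b')
    (hs : a + b = a' + b') (hd : |a - b| ≤ |a' - b'|) :
    negMulLog a' + negMulLog b' ≤ negMulLog a + negMulLog b := by
  by_cases h0 : a' = b'
  · have : a - b = 0 := by
      have : |a - b| ≤ 0 := by simpa [h0] using hd
      exact abs_nonpos_iff.mp this
    have h1 : a = a' := by linarith
    have h2 : b = b' := by linarith
    rw [h1, h2]
  have hne : a' - b' ≠ 0 := sub_ne_zero.mpr h0
  set u := (a - b) / (a' - b') with hu
  have hu1 : |u| ≤ 1 := by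
    rw [hu, abs_div]; exact (div_le_one (abs_pos.mpr hne)).mpr hd
  have hu2 : u * (a' - b') = a - b := div_mul_cancel₀ _ hne
  obtain ⟨hl, hr⟩ := abs_le.mp hu1
  have hc := Real.concaveOn_negMulLog.2
  have e1 := @hc a' ha' b' hb' ((1+u)/2) ((1-u)/2) (by linarith) (by linarith) (by ring)
  have e2 := @hc a' ha' b' hb' ((1-u)/2) ((1+u)/2) (by linarith) (by linarith) (by ring)
  simp only [smul_eq_mul] at e1 e2
  have i1 : (1+u)/2 * a' + (1-u)/2*b' = a := by linarith
  have i2 : (1-u)/2 * a' + (1+u)/2*b' = b := by linarith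
  rw [i1] at e1
  rw [i2] at e2
  linarith

noncomputable def cnv (T : Finset ℤ) (Q θ : ℤ → ℝ) (w : ℤ) : ℝ := ∑ s ∈ T, Q (w - s) * θ s

noncomputable def FF (T : Finset ℤ) (Q θ : ℤ → ℝ) : ℝ :=
  ∑ w ∈ T, Real.negMulLog (cnv T Q θ w) - ∑ s ∈ T, Real.negMulLog (θ s)

structure Adm (ms : ℕ) (θ : ℤ → ℝ) : Prop where
  nn : ∀ s, 0 ≤ θ s
  z : ∀ s, ¬ (0 ≤ s ∧ s ≤ (ms : ℤ)) → θ s = 0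

structure Good (T : Finset ℤ) (ms : ℕ) (Q : ℤ → ℝ) : Prop where
  sub : ∀ s : ℤ, 0 ≤ s → s ≤ (ms : ℤ) → s ∈ T
  nn : ∀ k, 0 ≤ Q k
  one : 0 < Q 1
  even : ∀ k, Q (-k) = Q k
  anti : ∀ a b : ℤ, |a| ≤ |b| → Q b ≤ Q a
  mass : ∀ s : ℤ, 0 ≤ s → s ≤ (ms : ℤ) → ∑ w ∈ T, Q (w - s) = 1

structure IsMin (T : Finset ℤ) (ms : ℕ) (Q θ : ℤ → ℝ) : Prop where
  adm : Adm ms θ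
  sum : ∑ s ∈ T, θ s = 1
  le : ∀ φ, Adm ms φ → ∑ s ∈ T, φ s = 1 → FF T Q θ ≤ FF T Q φ

section core
variable {T : Finset ℤ} {ms : ℕ} {Q : ℤ → ℝ}

lemma cnv_nn (hG : Good T ms Q) {θ : ℤ → ℝ} (h : Adm ms θ) (w : ℤ) : 0 ≤ cnv T Q θ w :=
  Finset.sum_nonneg fun s _ => mul_nonneg (hG.nn _) (h.nn s)

lemma cnv_mass (hG : Good T ms Q) {θ : ℤ → ℝ} (h : Adm ms θ) :
    ∑ w ∈ T, cnv T Q θ w = ∑ s ∈ T, θ s := by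
  unfold cnv
  rw [Finset.sum_comm]
  refine Finset.sum_congr rfl fun s _ => ?_
  rw [← Finset.sum_mul]
  by_cases hs : 0 ≤ s ∧ s ≤ (ms : ℤ)
  · rw [hG.mass s hs.1 hs.2, one_mul]
  · rw [h.z s hs, mul_zero]

lemma cnv_smul (θ : ℤ → ℝ) (a : ℝ) (w : ℤ) :
    cnv T Q (fun s => a * θ s) w = a * cnv T Q θ w := by
  unfold cnv
  rw [Finset.mul_sum]
  exact Finset.sum_congr rfl fun s _ => by ring

lemma cnv_add (θ φ : ℤ → ℝ) (w : ℤ) :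
    cnv T Q (fun s => θ s + φ s) w = cnv T Q θ w + cnv T Q φ w := by
  unfold cnv
  rw [← Finset.sum_add_distrib]
  exact Finset.sum_congr rfl fun s _ => by ring

lemma FF_smul (hG : Good T ms Q) {θ : ℤ → ℝ} (h : Adm ms θ) (a : ℝ) :
    FF T Q (fun s => a * θ s) = a * FF T Q θ := by
  unfold FF
  simp only [cnv_smul, Real.negMulLog_mul, Finset.sum_add_distrib, ← Finset.mul_sum,
    ← Finset.sum_mul, cnv_mass hG h]
  ring

lemma IsMin.lower (hG : Good T ms Q) {θ φ : ℤ → ℝ} (h : IsMin T ms Q θ) (hφ : Adm ms φ) :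
    FF T Q θ * ∑ s ∈ T, φ s ≤ FF T Q φ := by
  set m := ∑ s ∈ T, φ s with hm
  have hm0 : 0 ≤ m := Finset.sum_nonneg fun s _ => hφ.nn s
  rcases hm0.eq_or_lt with h0 | h0
  · have hz : ∀ s, φ s = 0 := by
      intro s
      by_cases hs : 0 ≤ s ∧ s ≤ (ms : ℤ)
      · exact (Finset.sum_eq_zero_iff_of_nonneg (fun s _ => hφ.nn s)).mp (hm ▸ h0.symm) s
          (hG.sub s hs.1 hs.2)
      · exact hφ.z s hs
    rw [← h0]
    simp [FF, cnv, hz]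
  · have := h.le (fun s => m⁻¹ * φ s)
      ⟨fun s => mul_nonneg (by positivity) (hφ.nn s), fun s hs => by rw [hφ.z s hs, mul_zero]⟩
      (by rw [← Finset.mul_sum, ← hm, inv_mul_cancel₀ h0.ne'])
    rw [FF_smul hG hφ] at this
    calc FF T Q θ * m ≤ (m⁻¹ * FF T Q φ) * m := mul_le_mul_of_nonneg_right this hm0
      _ = FF T Q φ := by field_simp

lemma pos_adj (hG : Good T ms Q) {θ : ℤ → ℝ} (h : IsMin T ms Q θ) {s0 s1 : ℤ}
    (h0 : 0 ≤ s0 ∧ s0 ≤ (ms : ℤ)) (h1 : 0 ≤ s1 ∧ s1 ≤ (ms : ℤ)) (h01 : |s1 - s0| = 1)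
    (hz : θ s0 = 0) : θ s1 = 0 := by
  by_contra hne
  have hp : 0 < θ s1 := lt_of_le_of_ne (h.adm.nn s1) (Ne.symm hne)
  have hT0 := hG.sub s0 h0.1 h0.2
  have hT1 := hG.sub s1 h1.1 h1.2
  have hQ0 : 0 < Q 0 := lt_of_lt_of_le hG.one (hG.anti 0 1 (by simp))
  have hQ1 : 0 < Q (s1 - s0) := lt_of_lt_of_le hG.one (hG.anti _ _ (by simp [h01]))
  set p := Q (s1 - s0)
  have ha : 0 < cnv T Q θ s1 := by
    refine lt_of_lt_of_le (mul_pos hQ0 hp) ?_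
    have := Finset.single_le_sum (f := fun s => Q (s1 - s) * θ s)
      (fun s _ => mul_nonneg (hG.nn _) (h.adm.nn s)) hT1
    simpa [cnv] using this
  set a := cnv T Q θ s1 with hadef
  set HQ := ∑ w ∈ T, Real.negMulLog (Q (w - s0)) with hHQ
  have key : ∀ t : ℝ, 0 < t → FF T Q θ ≤ HQ + p * (Real.log (t * p) - Real.log a) := by
    intro t ht
    set δ : ℤ → ℝ := fun s => if s = s0 then t else 0 with hδ
    have hφ : Adm ms (fun s => θ s + δ s) := by
      refine ⟨fun s => add_nonneg (h.adm.nn s) (by simp only [hδ]; split_ifs <;> linarith), ?_⟩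
      intro s hs
      have : s ≠ s0 := fun e => hs (e ▸ h0)
      simp [hδ, this, h.adm.z s hs]
    have hlow := h.lower hG hφ
    have hsumδ : ∑ s ∈ T, δ s = t := by simp [hδ, hT0]
    rw [Finset.sum_add_distrib, h.sum, hsumδ] at hlow
    have hcδ : ∀ w, cnv T Q δ w = t * Q (w - s0) := by
      intro w; simp [cnv, hδ, hT0, mul_comm]
    have e1 : ∑ s ∈ T, Real.negMulLog (θ s + δ s)
        = ∑ s ∈ T, Real.negMulLog (θ s) + Real.negMulLog t := by
      have : ∀ s ∈ T, Real.negMulLog (θ s + δ s) = Real.negMulLog (θ s)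
          + if s = s0 then Real.negMulLog t else 0 := by
        intro s _
        by_cases hs : s = s0
        · subst hs; simp [hδ, hz]
        · simp [hδ, hs]
      rw [Finset.sum_congr rfl this, Finset.sum_add_distrib]
      simp [hT0]
    have e2 : ∑ w ∈ T, Real.negMulLog (cnv T Q θ w + t * Q (w - s0))
        ≤ ∑ w ∈ T, (Real.negMulLog (cnv T Q θ w) + Real.negMulLog (t * Q (w - s0))
          + if w = s1 then (t * p * Real.log (t * p) - t * p * Real.log a) else 0) := by
      refine Finset.sum_le_sum fun w _ => ?_
      by_cases hw : w = s1
      · subst hw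
        have := nml_add_le ha (mul_pos ht hQ1).le
        simp only [if_true]
        change Real.negMulLog (a + t * p) ≤ Real.negMulLog a + Real.negMulLog (t * p) + _
        unfold Real.negMulLog at *
        linarith
      · simp only [hw, if_false, add_zero]
        exact nml_add_le' (cnv_nn hG h.adm w) (mul_nonneg ht.le (hG.nn _))
    have e3 : ∑ w ∈ T, Real.negMulLog (t * Q (w - s0)) = t * HQ + Real.negMulLog t := by
      simp only [Real.negMulLog_mul, Finset.sum_add_distrib, ← Finset.mul_sum, ← Finset.sum_mul,
        hG.mass s0 h0.1 h0.2]
      ring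
    rw [Finset.sum_add_distrib, Finset.sum_add_distrib, e3] at e2
    simp only [Finset.sum_ite_eq', hT1, if_true] at e2
    have e4 : FF T Q (fun s => θ s + δ s) ≤ FF T Q θ + t * HQ
        + (t * p * Real.log (t * p) - t * p * Real.log a) := by
      unfold FF
      simp only [cnv_add, hcδ]
      rw [e1]
      linarith
    have e5 : t * FF T Q θ ≤ t * (HQ + p * (Real.log (t * p) - Real.log a)) := by
      nlinarith
    exact le_of_mul_le_mul_left e5 ht
  have := key (Real.exp ((FF T Q θ - HQ - 1) / p - Real.log p + Real.log a)) (Real.exp_pos _)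
  rw [Real.log_mul (Real.exp_pos _).ne' hQ1.ne', Real.log_exp] at this
  have h3 : p * ((FF T Q θ - HQ - 1) / p - Real.log p + Real.log a + Real.log p - Real.log a)
      = FF T Q θ - HQ - 1 := by field_simp; ring
  linarith

lemma min_pos (hG : Good T ms Q) {θ : ℤ → ℝ} (h : IsMin T ms Q θ) {s : ℤ}
    (hs : 0 ≤ s ∧ s ≤ (ms : ℤ)) : 0 < θ s := by
  have key : ∀ k : ℕ, k ≤ ms → (θ k = 0 ↔ θ 0 = 0) := by
    intro k
    induction k with
    | zero => simp
    | succ k ih =>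
      intro hk
      rw [← ih (by omega)]
      constructor
      · exact pos_adj hG h (by omega) (by omega) (by simp)
      · exact pos_adj hG h (by omega) (by omega) (by simp)
  refine lt_of_le_of_ne (h.adm.nn s) fun e => ?_
  have h0 : θ 0 = 0 := by
    refine (key s.toNat (by omega)).mp ?_
    rw [Int.toNat_of_nonneg hs.1, e]
  have : ∑ s ∈ T, θ s = 0 := by
    refine Finset.sum_eq_zero fun t _ => ?_
    by_cases ht : 0 ≤ t ∧ t ≤ (ms : ℤ)
    · have := (key t.toNat (by omega)).mpr h0
      rwa [Int.toNat_of_nonneg ht.1] at this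
    · exact h.adm.z t ht
  rw [h.sum] at this
  exact one_ne_zero this

/-- log-sum term -/
lemma log_term {a b A B : ℝ} (ha : 0 < a) (hb : 0 < b) (hA : 0 < A) (hB : 0 < B) :
    a - b * A / B ≤ a * ((Real.log a - Real.log b) - (Real.log A - Real.log B)) ∧
    (a * ((Real.log a - Real.log b) - (Real.log A - Real.log B)) = a - b * A / B →
      a * B = b * A) := by
  set u := b * A / (a * B) with hu
  have hup : 0 < u := by positivity
  have hl : Real.log u = -((Real.log a - Real.log b) - (Real.log A - Real.log B)) := by
    rw [hu, Real.log_div (by positivity) (by positivity), Real.log_mul hb.ne' hA.ne',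
      Real.log_mul ha.ne' hB.ne']
    ring
  have hau : a * u = b * A / B := by rw [hu]; field_simp
  constructor
  · have := Real.log_le_sub_one_of_pos hup
    nlinarith
  · intro e
    by_contra hne
    have hu1 : u ≠ 1 := by
      intro h1
      rw [hu, div_eq_one_iff_eq (by positivity)] at h1
      exact hne h1.symm
    have := Real.log_lt_sub_one_of_pos hup hu1
    nlinarith

lemma FF_form (hG : Good T ms Q) {θ : ℤ → ℝ} (h : Adm ms θ) :
    FF T Q θ = ∑ w ∈ T, ∑ s ∈ T,
      Q (w - s) * (θ s * (Real.log (θ s) - Real.log (cnv T Q θ w))) := by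
  have e1 : ∑ s ∈ T, Real.negMulLog (θ s)
      = - ∑ w ∈ T, ∑ s ∈ T, Q (w - s) * (θ s * Real.log (θ s)) := by
    rw [Finset.sum_comm, ← Finset.sum_neg_distrib]
    refine Finset.sum_congr rfl fun s _ => ?_
    rw [← Finset.sum_mul]
    by_cases hs : 0 ≤ s ∧ s ≤ (ms : ℤ)
    · rw [hG.mass s hs.1 hs.2, Real.negMulLog]; ring
    · simp [h.z s hs]
  have e2 : ∀ w, Real.negMulLog (cnv T Q θ w)
      = - ∑ s ∈ T, Q (w - s) * (θ s * Real.log (cnv T Q θ w)) := by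
    intro w
    simp only [← mul_assoc]
    rw [← Finset.sum_mul, Real.negMulLog]
    change _ = -(cnv T Q θ w * _)
    ring
  unfold FF
  rw [e1]
  simp only [e2]
  rw [Finset.sum_neg_distrib, ← sub_eq_zero]
  simp only [mul_sub, Finset.sum_sub_distrib]
  ring

lemma min_unique (hG : Good T ms Q) {θ φ : ℤ → ℝ} (h : IsMin T ms Q θ) (h' : IsMin T ms Q φ) :
    θ = φ := by
  have hFe : FF T Q θ = FF T Q φ :=
    le_antisymm (h.le φ h'.adm h'.sum) (h'.le θ h.adm h.sum)
  have hadd : Adm ms (fun s => θ s + φ s) :=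
    ⟨fun s => add_nonneg (h.adm.nn s) (h'.adm.nn s),
      fun s hs => by rw [h.adm.z s hs, h'.adm.z s hs, add_zero]⟩
  have hlow := h.lower hG hadd
  rw [Finset.sum_add_distrib, h.sum, h'.sum] at hlow
  have hgap : FF T Q θ + FF T Q φ - FF T Q (fun s => θ s + φ s) ≤ 0 := by linarith
  rw [FF_form hG h.adm, FF_form hG h'.adm, FF_form hG hadd, ← Finset.sum_add_distrib,
    ← Finset.sum_sub_distrib] at hgap
  simp only [← Finset.sum_add_distrib, ← Finset.sum_sub_distrib, cnv_add] at hgap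
  set g : ℤ → ℤ → ℝ := fun w s => Q (w - s) * (θ s * (Real.log (θ s) - Real.log (cnv T Q θ w))) +
          Q (w - s) * (φ s * (Real.log (φ s) - Real.log (cnv T Q φ w))) -
        Q (w - s) * ((θ s + φ s) * (Real.log (θ s + φ s)
          - Real.log (cnv T Q θ w + cnv T Q φ w))) with hg
  have cpos : ∀ ψ, IsMin T ms Q ψ → ∀ w s : ℤ, (0 ≤ s ∧ s ≤ (ms : ℤ)) → 0 < Q (w - s) →
      0 < cnv T Q ψ w := by
    intro ψ hψ w s hs hq
    refine lt_of_lt_of_le (mul_pos hq (min_pos hG hψ hs)) ?_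
    exact Finset.single_le_sum (f := fun s => Q (w - s) * ψ s)
      (fun s _ => mul_nonneg (hG.nn _) (hψ.adm.nn s)) (hG.sub s hs.1 hs.2)
  have hterm : ∀ w s, 0 ≤ g w s ∧ ((0 ≤ s ∧ s ≤ (ms : ℤ)) → 0 < Q (w - s) → g w s = 0 →
      θ s * (cnv T Q θ w + cnv T Q φ w) = cnv T Q θ w * (θ s + φ s)) := by
    intro w s
    by_cases hs : 0 ≤ s ∧ s ≤ (ms : ℤ)
    swap
    · exact ⟨by simp [hg, h.adm.z s hs, h'.adm.z s hs], fun h => absurd h hs⟩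
    rcases (hG.nn (w - s)).eq_or_lt with hq | hq
    · exact ⟨by simp [hg, ← hq], fun _ h => absurd h (by rw [← hq]; exact lt_irrefl _)⟩
    have p1 := min_pos hG h hs
    have p2 := min_pos hG h' hs
    have c1 := cpos θ h w s hs hq
    have c2 := cpos φ h' w s hs hq
    obtain ⟨l1, q1⟩ := log_term p1 c1 (add_pos p1 p2) (add_pos c1 c2)
    obtain ⟨l2, q2⟩ := log_term p2 c2 (add_pos p1 p2) (add_pos c1 c2)
    set A := θ s + φ s with hA
    set B := cnv T Q θ w + cnv T Q φ w with hB
    have hBp : 0 < B := add_pos c1 c2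
    have hsum : (θ s - cnv T Q θ w * A / B) + (φ s - cnv T Q φ w * A / B) = 0 := by
      have : cnv T Q θ w * A / B + cnv T Q φ w * A / B = A := by
        rw [← add_div, ← add_mul, ← hB]; field_simp
      linarith
    have hgf : g w s = Q (w - s) *
        (θ s * (Real.log (θ s) - Real.log (cnv T Q θ w) - (Real.log A - Real.log B))
        + φ s * (Real.log (φ s) - Real.log (cnv T Q φ w) - (Real.log A - Real.log B))) := by
      simp only [hg]; rw [← hA, ← hB]
      rw [show (A * (Real.log A - Real.log B)) = (θ s + φ s) * (Real.log A - Real.log B) from rfl]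
      ring
    constructor
    · rw [hgf]; exact mul_nonneg hq.le (by linarith)
    · intro _ _ h0
      rw [hgf] at h0
      have := (mul_eq_zero.mp h0).resolve_left hq.ne'
      exact q1 (by linarith)
  have hz : ∀ w ∈ T, ∀ s ∈ T, g w s = 0 := by
    have h1 : ∑ w ∈ T, ∑ s ∈ T, g w s = 0 := le_antisymm hgap
      (Finset.sum_nonneg fun w _ => Finset.sum_nonneg fun s _ => (hterm w s).1)
    intro w hw s hs
    have h2 := (Finset.sum_eq_zero_iff_of_nonneg
      (fun w _ => Finset.sum_nonneg fun s _ => (hterm w s).1)).mp h1 w hw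
    exact (Finset.sum_eq_zero_iff_of_nonneg (fun s _ => (hterm w s).1)).mp h2 s hs
  have hQ0 : 0 < Q 0 := lt_of_lt_of_le hG.one (hG.anti 0 1 (by simp))
  have hQm : 0 < Q (-1) := by rw [hG.even]; exact hG.one
  have hcross : ∀ k : ℕ, k ≤ ms → θ k * φ 0 = φ k * θ 0 := by
    intro k
    induction k with
    | zero => intro _; simp [mul_comm]
    | succ k ih =>
      intro hk
      have ih := ih (by omega)
      have hs : (0:ℤ) ≤ (k:ℤ) ∧ (k:ℤ) ≤ (ms:ℤ) := by omega
      have hs' : (0:ℤ) ≤ ((k+1:ℕ):ℤ) ∧ ((k+1:ℕ):ℤ) ≤ (ms:ℤ) := by omega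
      have hqa : 0 < Q ((k:ℤ) - k) := by simpa using hQ0
      have hqb : 0 < Q ((k:ℤ) - ((k+1:ℕ):ℤ)) := by
        have : (k:ℤ) - ((k+1:ℕ):ℤ) = -1 := by omega
        rw [this]; exact hQm
      have t1 := (hterm k k).2 hs hqa (hz _ (hG.sub _ hs.1 hs.2) _ (hG.sub _ hs.1 hs.2))
      have t2 := (hterm k ((k+1:ℕ):ℤ)).2 hs' hqb
        (hz _ (hG.sub _ hs.1 hs.2) _ (hG.sub _ hs'.1 hs'.2))
      have c1 := cpos θ h k k hs hqa
      have c2 := cpos φ h' k k hs hqa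
      have p1 := min_pos hG h hs
      have p2 := min_pos hG h' hs
      set c := cnv T Q θ k
      set d := cnv T Q φ k
      have t1' : θ k * d = φ k * c := by linarith
      have t2' : θ ((k+1:ℕ):ℤ) * d = φ ((k+1:ℕ):ℤ) * c := by linarith
      have hcan : (θ k * d) ≠ 0 := by positivity
      apply mul_left_cancel₀ hcan
      calc θ k * d * (θ ((k+1:ℕ):ℤ) * φ 0) = (θ ((k+1:ℕ):ℤ) * d) * (θ k * φ 0) := by ring
        _ = (φ ((k+1:ℕ):ℤ) * c) * (φ k * θ 0) := by rw [t2', ih]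
        _ = (φ k * c) * (φ ((k+1:ℕ):ℤ) * θ 0) := by ring
        _ = _ := by rw [t1']
  have hall : ∀ s, θ s * φ 0 = φ s * θ 0 := by
    intro s
    by_cases hs : 0 ≤ s ∧ s ≤ (ms : ℤ)
    · have := hcross s.toNat (by omega)
      rwa [Int.toNat_of_nonneg hs.1] at this
    · rw [h.adm.z s hs, h'.adm.z s hs]; ring
  have h00 : φ 0 = θ 0 := by
    have : ∑ s ∈ T, θ s * φ 0 = ∑ s ∈ T, φ s * θ 0 := Finset.sum_congr rfl fun s _ => hall s
    rwa [← Finset.sum_mul, ← Finset.sum_mul, h.sum, h'.sum, one_mul, one_mul] at this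
  have hp := min_pos hG h (s := 0) (by omega)
  funext s
  have := hall s
  rw [h00] at this
  exact mul_right_cancel₀ hp.ne' this

lemma sum_refl {c : ℤ} (hT : ∀ t ∈ T, c - t ∈ T) (g : ℤ → ℝ) :
    ∑ t ∈ T, g (c - t) = ∑ t ∈ T, g t :=
  Finset.sum_nbij' (fun t => c - t) (fun t => c - t) hT hT (by simp) (by simp) (by simp)

lemma cnv_refl (hG : Good T ms Q) {c : ℤ} (hT : ∀ t ∈ T, c - t ∈ T) (θ : ℤ → ℝ) (w : ℤ) :
    cnv T Q (fun s => θ (c - s)) w = cnv T Q θ (c - w) := by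
  unfold cnv
  rw [← sum_refl hT]
  refine Finset.sum_congr rfl fun s _ => ?_
  beta_reduce
  rw [← hG.even (w - (c - s)), sub_sub_cancel, show -(w - (c - s)) = c - w - s by ring]

lemma min_symm (hG : Good T ms Q) (hT : ∀ t ∈ T, (ms : ℤ) - t ∈ T) {θ : ℤ → ℝ}
    (h : IsMin T ms Q θ) (s : ℤ) : θ (ms - s) = θ s := by
  have hF : FF T Q (fun s => θ (ms - s)) = FF T Q θ := by
    unfold FF
    simp only [cnv_refl hG hT]
    rw [sum_refl hT (fun w => Real.negMulLog (cnv T Q θ w)),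
      sum_refl hT (fun w => Real.negMulLog (θ w))]
  have h2 : IsMin T ms Q (fun s => θ (ms - s)) :=
    ⟨⟨fun s => h.adm.nn _, fun s hs => h.adm.z _ (by omega)⟩, by rw [sum_refl hT, h.sum],
      fun φ a b => hF ▸ h.le φ a b⟩
  exact congrFun (min_unique hG h2 h) s

noncomputable def polar (c : ℤ) (θ : ℤ → ℝ) (s : ℤ) : ℝ :=
  if 2 * s ≤ c then max (θ s) (θ (c - s)) else min (θ s) (θ (c - s))

lemma polar_cases (c : ℤ) (θ : ℤ → ℝ) (s : ℤ) :
    (polar c θ s = θ s ∧ polar c θ (c - s) = θ (c - s)) ∨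
    (polar c θ s = θ (c - s) ∧ polar c θ (c - s) = θ s) := by
  unfold polar
  rw [sub_sub_cancel]
  rcases lt_trichotomy (2 * s) c with h | h | h
  · rw [if_pos h.le, if_neg (by omega)]
    rcases le_total (θ s) (θ (c - s)) with h' | h' <;> simp [h']
  · have : c - s = s := by omega
    rw [this]; simp
  · rw [if_neg (by omega), if_pos (by omega)]
    rcases le_total (θ s) (θ (c - s)) with h' | h' <;> simp [h']

lemma polar_diff (c : ℤ) (θ : ℤ → ℝ) (s : ℤ) :
    (2 * s ≤ c → polar c θ s - polar c θ (c - s) = |θ s - θ (c - s)|) ∧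
    (c < 2 * s → polar c θ s - polar c θ (c - s) = -|θ s - θ (c - s)|) := by
  unfold polar
  rw [sub_sub_cancel]
  constructor
  · intro h
    rcases h.lt_or_eq with h | h
    · rw [if_pos h.le, if_neg (by omega), min_comm, max_sub_min_eq_abs']
    · have : c - s = s := by omega
      rw [this]; simp
  · intro h
    rw [if_neg (by omega), if_pos (by omega), max_comm, ← neg_sub, max_sub_min_eq_abs']

lemma sum_symm_kernel {c : ℤ} (hT : ∀ t ∈ T, c - t ∈ T) (θ M : ℤ → ℝ)
    (hM : ∀ s, M (c - s) = M s) :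
    2 * ∑ s ∈ T, M s * θ s = ∑ s ∈ T, M s * (θ s + θ (c - s)) := by
  have := sum_refl hT (fun s => M s * θ s)
  simp only [hM] at this
  simp only [mul_add, Finset.sum_add_distrib, this]
  ring

lemma sum_anti_kernel {c : ℤ} (hT : ∀ t ∈ T, c - t ∈ T) (θ K : ℤ → ℝ)
    (hK : ∀ s, K (c - s) = - K s) :
    2 * ∑ s ∈ T, K s * θ s = ∑ s ∈ T, K s * (θ s - θ (c - s)) := by
  have := sum_refl hT (fun s => K s * θ s)
  simp only [hK, neg_mul, Finset.sum_neg_distrib] at this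
  simp only [mul_sub, Finset.sum_sub_distrib]
  linarith

lemma polar_FF (hG : Good T ms Q) {c : ℤ} (hT : ∀ t ∈ T, c - t ∈ T) {θ : ℤ → ℝ}
    (h' : Adm ms (polar c θ)) :
    FF T Q (polar c θ) ≤ FF T Q θ := by
  set φ := polar c θ with hφ
  have hsum : ∀ s, φ s + φ (c - s) = θ s + θ (c - s) := by
    intro s
    rcases polar_cases c θ s with ⟨a, b⟩ | ⟨a, b⟩ <;> rw [hφ, a, b]
    ring
  have e1 : ∑ s ∈ T, Real.negMulLog (φ s) = ∑ s ∈ T, Real.negMulLog (θ s) := by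
    have a1 := sum_refl hT (fun s => Real.negMulLog (φ s))
    have a2 := sum_refl hT (fun s => Real.negMulLog (θ s))
    have : ∑ s ∈ T, (Real.negMulLog (φ s) + Real.negMulLog (φ (c - s)))
        = ∑ s ∈ T, (Real.negMulLog (θ s) + Real.negMulLog (θ (c - s))) := by
      refine Finset.sum_congr rfl fun s _ => ?_
      rcases polar_cases c θ s with ⟨a, b⟩ | ⟨a, b⟩ <;> rw [hφ, a, b]
      ring
    rw [Finset.sum_add_distrib, Finset.sum_add_distrib] at this
    linarith
  have e2 : ∑ s ∈ T, Real.negMulLog (cnv T Q φ s) ≤ ∑ s ∈ T, Real.negMulLog (cnv T Q θ s) := by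
    have a1 := sum_refl hT (fun s => Real.negMulLog (cnv T Q φ s))
    have a2 := sum_refl hT (fun s => Real.negMulLog (cnv T Q θ s))
    have : ∑ s ∈ T, (Real.negMulLog (cnv T Q φ s) + Real.negMulLog (cnv T Q φ (c - s)))
        ≤ ∑ s ∈ T, (Real.negMulLog (cnv T Q θ s) + Real.negMulLog (cnv T Q θ (c - s))) := by
      refine Finset.sum_le_sum fun w _ => ?_
      have r1 : ∀ s, Q (w - (c - s)) = Q (c - w - s) := fun s => by
        rw [← hG.even]; congr 1; ring
      have r2 : ∀ s, Q (c - w - (c - s)) = Q (w - s) := fun s => by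
        rw [← hG.even]; congr 1; ring
      set M : ℤ → ℝ := fun s => Q (w - s) + Q (c - w - s) with hMdef
      set K : ℤ → ℝ := fun s => Q (w - s) - Q (c - w - s) with hKdef
      have hM : ∀ s, M (c - s) = M s := fun s => by
        simp only [hMdef, r1, r2]; ring
      have hK : ∀ s, K (c - s) = - K s := fun s => by
        simp only [hKdef, r1, r2]; ring
      have cs : ∀ ψ : ℤ → ℝ, cnv T Q ψ w + cnv T Q ψ (c - w) = ∑ s ∈ T, M s * ψ s := by
        intro ψ
        unfold cnv
        rw [← Finset.sum_add_distrib]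
        exact Finset.sum_congr rfl fun s _ => by simp only [hMdef]; ring
      have cd : ∀ ψ : ℤ → ℝ, cnv T Q ψ w - cnv T Q ψ (c - w) = ∑ s ∈ T, K s * ψ s := by
        intro ψ
        unfold cnv
        rw [← Finset.sum_sub_distrib]
        exact Finset.sum_congr rfl fun s _ => by simp only [hKdef]; ring
      refine nml_pair (cnv_nn hG h' _) (cnv_nn hG h' _) ?_ ?_
      · rw [cs, cs]
        have b1 := sum_symm_kernel hT θ M hM
        have b2 := sum_symm_kernel hT φ M hM
        simp only [hsum] at b2
        linarith
      · rw [cd, cd]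
        have b1 := sum_anti_kernel hT θ K hK
        have b2 := sum_anti_kernel hT φ K hK
        have k1 : |∑ s ∈ T, K s * (θ s - θ (c - s))| ≤ ∑ s ∈ T, |K s| * |θ s - θ (c - s)| := by
          refine (Finset.abs_sum_le_sum_abs _ _).trans (le_of_eq ?_)
          exact Finset.sum_congr rfl fun s _ => abs_mul _ _
        have k2 : ∑ s ∈ T, |K s| * |θ s - θ (c - s)| ≤ |∑ s ∈ T, K s * (φ s - φ (c - s))| := by
          rcases le_or_gt (2 * w) c with hw | hw
          · refine le_trans (le_of_eq ?_) (le_abs_self _)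
            refine Finset.sum_congr rfl fun s _ => ?_
            rcases le_or_gt (2 * s) c with hs | hs
            · have : 0 ≤ K s := sub_nonneg.mpr (hG.anti _ _ (by
                rw [Int.abs_eq_natAbs, Int.abs_eq_natAbs]; omega))
              rw [hφ, (polar_diff c θ s).1 hs, abs_of_nonneg this]
            · have : K s ≤ 0 := sub_nonpos.mpr (hG.anti _ _ (by
                rw [Int.abs_eq_natAbs, Int.abs_eq_natAbs]; omega))
              rw [hφ, (polar_diff c θ s).2 hs, abs_of_nonpos this]; ring
          · refine le_trans (le_of_eq ?_) (neg_le_abs _)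
            rw [← Finset.sum_neg_distrib]
            refine Finset.sum_congr rfl fun s _ => ?_
            rcases le_or_gt (2 * s) c with hs | hs
            · have : K s ≤ 0 := sub_nonpos.mpr (hG.anti _ _ (by
                rw [Int.abs_eq_natAbs, Int.abs_eq_natAbs]; omega))
              rw [hφ, (polar_diff c θ s).1 hs, abs_of_nonpos this]; ring
            · have : 0 ≤ K s := sub_nonneg.mpr (hG.anti _ _ (by
                rw [Int.abs_eq_natAbs, Int.abs_eq_natAbs]; omega))
              rw [hφ, (polar_diff c θ s).2 hs, abs_of_nonneg this]; ring
        rw [← b1] at k1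
        rw [← b2] at k2
        rw [abs_mul] at k1 k2
        have : |(2:ℝ)| = 2 := abs_two
        rw [this] at k1 k2
        linarith
    rw [Finset.sum_add_distrib, Finset.sum_add_distrib] at this
    linarith
  unfold FF
  rw [e1]
  linarith

lemma min_polar (hG : Good T ms Q) {c : ℤ} (hc : (ms : ℤ) ≤ c) (hT : ∀ t ∈ T, c - t ∈ T)
    {θ : ℤ → ℝ} (h : IsMin T ms Q θ) {s : ℤ} (hs : 2 * s ≤ c) : θ (c - s) ≤ θ s := by
  have hadm : Adm ms (polar c θ) := by
    constructor
    · intro s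
      rcases polar_cases c θ s with ⟨a, _⟩ | ⟨a, _⟩ <;> rw [a] <;> exact h.adm.nn _
    · intro s hs
      unfold polar
      rw [h.adm.z s hs]
      split_ifs with h2
      · rw [h.adm.z (c - s) (by omega)]; simp
      · exact min_eq_left (h.adm.nn _)
  have hsum : ∑ s ∈ T, polar c θ s = 1 := by
    have a1 := sum_refl hT (polar c θ)
    have a2 := sum_refl hT θ
    have : ∑ s ∈ T, (polar c θ s + polar c θ (c - s)) = ∑ s ∈ T, (θ s + θ (c - s)) := by
      refine Finset.sum_congr rfl fun s _ => ?_
      rcases polar_cases c θ s with ⟨a, b⟩ | ⟨a, b⟩ <;> rw [a, b]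
      ring
    rw [Finset.sum_add_distrib, Finset.sum_add_distrib] at this
    linarith [h.sum]
  have hF := polar_FF hG hT hadm
  have h2 : IsMin T ms Q (polar c θ) := ⟨hadm, hsum, fun φ a b => hF.trans (h.le φ a b)⟩
  have e := congrFun (min_unique hG h2 h) s
  rw [polar, if_pos hs] at e
  exact le_trans (le_max_right _ _) e.le
end core

section bridge

lemma extZ_in {n : ℕ} (f : Fin (n + 1) → ℝ) (i : Fin (n + 1)) : extZ f ((i : ℕ) : ℤ) = f i := by
  unfold extZ
  rw [dif_pos (by omega)]
  congr 1

lemma extZ_out {n : ℕ} (f : Fin (n + 1) → ℝ) {k : ℤ} (h : ¬ (0 ≤ k ∧ k ≤ (n : ℤ))) :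
    extZ f k = 0 := by
  unfold extZ
  rw [dif_neg h]

lemma sum_ext {n : ℕ} (T : Finset ℤ) (hT : ∀ s : ℤ, 0 ≤ s → s ≤ (n : ℤ) → s ∈ T) (h : ℤ → ℝ)
    (hz : ∀ k : ℤ, ¬ (0 ≤ k ∧ k ≤ (n : ℤ)) → h k = 0) :
    ∑ k ∈ T, h k = ∑ i : Fin (n + 1), h ((i : ℕ) : ℤ) := by
  have hinj : ∀ i ∈ (Finset.univ : Finset (Fin (n + 1))), ∀ j ∈ (Finset.univ : Finset (Fin (n+1))),
      (((i : ℕ) : ℤ)) = ((j : ℕ) : ℤ) → i = j := fun i _ j _ e => Fin.ext (by exact_mod_cast e)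
  rw [← Finset.sum_image (g := fun i : Fin (n + 1) => ((i : ℕ) : ℤ)) hinj]
  symm
  apply Finset.sum_subset
  · intro k hk
    simp only [Finset.mem_image, Finset.mem_univ, true_and] at hk
    obtain ⟨i, rfl⟩ := hk
    exact hT _ (by omega) (by omega)
  · intro k _ hk
    apply hz
    rintro ⟨a, b⟩
    apply hk
    simp only [Finset.mem_image, Finset.mem_univ, true_and]
    exact ⟨⟨k.toNat, by omega⟩, by simp [a]⟩

lemma ent_eq {Ω α : Type*} [Fintype Ω] [DecidableEq α] (p : Ω → ℝ) (Z : Ω → α) :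
    ent p Z * Real.log 2 = ∑ z ∈ Finset.univ.image Z, Real.negMulLog (pr p Z z) := by
  have h2 : Real.log 2 ≠ 0 := (Real.log_pos (by norm_num)).ne'
  unfold ent
  rw [neg_mul, Finset.sum_mul, ← Finset.sum_neg_distrib]
  refine Finset.sum_congr rfl fun z _ => ?_
  rw [Real.logb, Real.negMulLog]
  field_simp

lemma ent_inj {Ω α : Type*} [Fintype Ω] [DecidableEq α] (p : Ω → ℝ) (Z : Ω → α)
    (hZ : Function.Injective Z) :
    ent p Z * Real.log 2 = ∑ ω, Real.negMulLog (p ω) := by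
  rw [ent_eq, Finset.sum_image (fun a _ b _ e => hZ e)]
  refine Finset.sum_congr rfl fun ω _ => ?_
  congr 1
  unfold pr
  have : Finset.univ.filter (fun ω' => Z ω' = Z ω) = {ω} := by
    ext ω'; simp [hZ.eq_iff]
  rw [this, Finset.sum_singleton]

lemma iidMI_eq (mx ms : ℕ) (PX : Fin (mx + 1) → ℝ) (hPX : IsPMF PX)
    (T : Finset ℤ) (hT : ∀ s : ℤ, -(mx : ℤ) ≤ s → s ≤ (ms : ℤ) + mx → s ∈ T)
    (Q : ℤ → ℝ) (hQ : ∀ k, Q k = extZ PX (((mx / 2 : ℕ) : ℤ) + k)) (hev : ∀ k, Q (-k) = Q k)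
    (θ : Fin (ms + 1) → ℝ) (hθ : IsPMF θ) :
    iidMI mx ms PX θ * Real.log 2 = FF T Q (extZ θ) := by
  set c0 : ℤ := ((mx / 2 : ℕ) : ℤ) with hc0
  have hTs : ∀ s : ℤ, 0 ≤ s → s ≤ (ms : ℤ) → s ∈ T := fun s a b => hT s (by omega) (by omega)
  set p : Fin (mx + 1) × Fin (ms + 1) → ℝ := fun ω => PX ω.1 * θ ω.2 with hp
  set A : Fin (mx + 1) × Fin (ms + 1) → ℤ := fun ω => ((ω.2 : ℕ) : ℤ) - ((ω.1 : ℕ) : ℤ) with hA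
  have e1 : ∑ s ∈ T, Real.negMulLog (extZ θ s) = ∑ i, Real.negMulLog (θ i) := by
    rw [sum_ext T hTs _ (fun k hk => by rw [extZ_out θ hk, Real.negMulLog_zero])]
    simp only [extZ_in]
  have e2 : ent p (fun ω => ω.1) * Real.log 2 = ∑ x, Real.negMulLog (PX x) := by
    rw [ent_eq]
    have : Finset.univ.image (fun ω : Fin (mx + 1) × Fin (ms + 1) => ω.1) = Finset.univ := by
      ext x; simp
    rw [this]
    refine Finset.sum_congr rfl fun x _ => ?_
    congr 1
    unfold pr
    rw [Finset.sum_filter, Fintype.sum_prod_type]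
    simp only [hp]
    rw [Finset.sum_eq_single x]
    · simp [← Finset.mul_sum, hθ.2]
    · intro b _ hb; simp [hb]
    · simp
  have e3 : ent p (fun ω => (A ω, ω.1)) * Real.log 2
      = ∑ x, Real.negMulLog (PX x) + ∑ i, Real.negMulLog (θ i) := by
    rw [ent_inj]
    · rw [Fintype.sum_prod_type]
      simp only [hp, Real.negMulLog_mul, Finset.sum_add_distrib, ← Finset.mul_sum,
        ← Finset.sum_mul, hθ.2, hPX.2]
      ring
    · rintro ⟨x, s⟩ ⟨x', s'⟩ e
      simp only [hA, Prod.mk.injEq] at e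
      obtain ⟨e, rfl⟩ := e
      ext
      · rfl
      · simp only; omega
  have hpr : ∀ v, pr p A (v - c0) = cnv T Q (extZ θ) v := by
    intro v
    unfold cnv pr
    rw [sum_ext T hTs _ (fun k hk => by rw [extZ_out θ hk, mul_zero]), Finset.sum_filter,
      Fintype.sum_prod_type_right]
    refine Finset.sum_congr rfl fun s _ => ?_
    rw [extZ_in, ← hev, hQ]
    simp only [hp, hA]
    by_cases hk : 0 ≤ c0 + -(v - ((s : ℕ) : ℤ)) ∧ c0 + -(v - ((s : ℕ) : ℤ)) ≤ (mx : ℤ)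
    · set x0 : Fin (mx + 1) := ⟨(c0 + -(v - ((s : ℕ) : ℤ))).toNat, by omega⟩ with hx0
      have hx0' : ((x0 : ℕ) : ℤ) = c0 + -(v - ((s : ℕ) : ℤ)) := by
        simp only [hx0]; exact Int.toNat_of_nonneg hk.1
      rw [← hx0', extZ_in, Finset.sum_eq_single x0]
      · rw [if_pos (by omega)]
      · intro b _ hb
        rw [if_neg]
        intro e
        exact hb (Fin.ext (by omega))
      · simp
    · rw [extZ_out _ hk, zero_mul]
      refine Finset.sum_eq_zero fun x _ => ?_
      rw [if_neg]
      omega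
  have e4 : ent p A * Real.log 2 = ∑ w ∈ T, Real.negMulLog (cnv T Q (extZ θ) w) := by
    rw [ent_eq]
    have hinj : ∀ i ∈ T, ∀ j ∈ T, i - c0 = j - c0 → i = j := fun i _ j _ e => by omega
    simp only [← hpr]
    rw [← Finset.sum_image (g := fun v => v - c0) (f := fun z => Real.negMulLog (pr p A z)) hinj]
    apply Finset.sum_subset
    · intro z hz
      simp only [Finset.mem_image, Finset.mem_univ, true_and] at hz ⊢
      obtain ⟨ω, rfl⟩ := hz
      refine ⟨A ω + c0, hT _ ?_ ?_, by ring⟩ <;> simp only [hA] <;> omega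
    · intro z _ hz
      have : pr p A z = 0 := by
        unfold pr
        apply Finset.sum_eq_zero
        intro ω hω
        exfalso
        apply hz
        simp only [Finset.mem_filter, Finset.mem_univ, true_and] at hω
        exact Finset.mem_image.mpr ⟨ω, Finset.mem_univ _, hω⟩
      rw [this, Real.negMulLog_zero]
  change (ent p A + ent p (fun ω => ω.1) - ent p (fun ω => (A ω, ω.1))) * Real.log 2 = _
  unfold FF
  rw [e1, sub_mul, add_mul, e2, e3, e4]
  ring

lemma main_setup (mx ms : ℕ) (hmx : 1 ≤ mx)
    (PX : Fin (mx + 1) → ℝ) (hPX : IsPMF PX) (hpos : ∀ x, 0 < PX x)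
    (hsym : ∀ k : ℕ, extZ PX (((mx / 2 : ℕ) : ℤ) + k) = extZ PX (((mx / 2 : ℕ) : ℤ) - k))
    (hmono : ∀ k : ℕ,
      extZ PX (((mx / 2 : ℕ) : ℤ) + k + 1) ≤ extZ PX (((mx / 2 : ℕ) : ℤ) + k))
    (θs : Fin (ms + 1) → ℝ) (hθs : IsPMF θs)
    (hmin : ∀ θ : Fin (ms + 1) → ℝ, IsPMF θ → iidMI mx ms PX θs ≤ iidMI mx ms PX θ)
    (T : Finset ℤ) (hT : ∀ s : ℤ, -(mx : ℤ) ≤ s → s ≤ (ms : ℤ) + mx → s ∈ T) :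
    ∃ Q, Good T ms Q ∧ IsMin T ms Q (extZ θs) := by
  set c0 : ℤ := ((mx / 2 : ℕ) : ℤ) with hc0
  have hTs : ∀ s : ℤ, 0 ≤ s → s ≤ (ms : ℤ) → s ∈ T := fun s a b => hT s (by omega) (by omega)
  set Q : ℤ → ℝ := fun k => extZ PX (c0 + k) with hQ
  have hev : ∀ k, Q (-k) = Q k := by
    intro k
    simp only [hQ]
    rcases Int.eq_nat_or_neg k with ⟨n, rfl | rfl⟩
    · rw [hsym n]; rfl
    · rw [neg_neg, hsym n]; rfl
  have hnat : ∀ k : ℤ, Q k = Q (k.natAbs : ℤ) := by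
    intro k
    rcases Int.natAbs_eq k with h | h
    · rw [← h]
    · conv_lhs => rw [h, hev]
  have hanti : Antitone (fun n : ℕ => Q (n : ℤ)) := by
    apply antitone_nat_of_succ_le
    intro n
    have := hmono n
    simp only [hQ]
    push_cast
    rwa [← add_assoc]
  have hext : ∀ {n : ℕ} (f : Fin (n + 1) → ℝ), (∀ i, 0 ≤ f i) → ∀ k, 0 ≤ extZ f k := by
    intro n f hf k
    unfold extZ
    split_ifs
    · exact hf _
    · exact le_rfl
  have hsumext : ∀ θ : Fin (ms + 1) → ℝ, ∑ s ∈ T, extZ θ s = ∑ i, θ i := by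
    intro θ
    rw [sum_ext T hTs _ (fun k hk => extZ_out θ hk)]
    simp only [extZ_in]
  refine ⟨Q, ⟨hTs, fun k => hext PX hPX.1 _, ?_, hev, ?_, ?_⟩, ⟨⟨hext θs hθs.1, fun s hs =>
    extZ_out θs hs⟩, by rw [hsumext, hθs.2], ?_⟩⟩
  · have : c0 + 1 = (((⟨mx / 2 + 1, by omega⟩ : Fin (mx + 1)) : ℕ) : ℤ) := by simp [hc0]
    simp only [hQ]
    rw [this, extZ_in]
    exact hpos _
  · intro a b hab
    rw [hnat a, hnat b]
    exact hanti (by rw [Int.abs_eq_natAbs, Int.abs_eq_natAbs] at hab; omega)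
  · intro s hs0 hs1
    have hinj : ∀ i ∈ T, ∀ j ∈ T, c0 + (i - s) = c0 + (j - s) → i = j := fun i _ j _ e => by omega
    simp only [hQ]
    rw [← Finset.sum_image (g := fun w => c0 + (w - s)) (f := fun z => extZ PX z) hinj]
    rw [sum_ext (n := mx) _ _ _ (fun k hk => extZ_out PX hk)]
    · simp only [extZ_in, hPX.2]
    · intro k h0 h1
      exact Finset.mem_image.mpr ⟨k - c0 + s, hT _ (by omega) (by omega), by ring⟩
  · intro φ hφ hφ1
    set θ : Fin (ms + 1) → ℝ := fun i => φ ((i : ℕ) : ℤ) with hθ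
    have hφθ : extZ θ = φ := by
      funext k
      by_cases hk : 0 ≤ k ∧ k ≤ (ms : ℤ)
      · unfold extZ
        rw [dif_pos hk]
        simp only [hθ]
        rw [Int.toNat_of_nonneg hk.1]
      · rw [extZ_out _ hk, hφ.z k hk]
    have hpm : IsPMF θ := ⟨fun i => hφ.nn _, by rw [← hsumext, hφθ, hφ1]⟩
    rw [← hφθ, ← iidMI_eq mx ms PX hPX T hT Q (fun _ => rfl) hev θ hpm,
      ← iidMI_eq mx ms PX hPX T hT Q (fun _ => rfl) hev θs hθs]
    exact mul_le_mul_of_nonneg_right (hmin θ hpm) (Real.log_pos (by norm_num)).le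

end bridge

/-- If the fully supported pmf `P_X` on `𝒳` is symmetric and unimodal
around `c = ⌊m_x/2⌋` (with out-of-range values read as `0`), then any minimizer `θ*` of
`θ ↦ I(S - X; X)` over pmfs on `𝒮` is *almost* symmetric and unimodal around
`m* = ⌊m_s/2⌋`: if `m_s` is even, `θ*(m*) ≥ θ*(m*+1) = θ*(m*-1) ≥ θ*(m*+2) = θ*(m*-2) ≥ …`,
and if `m_s` is odd, `θ*(m*) = θ*(m*+1) ≥ θ*(m*-1) = θ*(m*+2) ≥ θ*(m*-2) = …`. -/
theorem minimizer_almost_symmetric_unimodal (mx ms : ℕ) (hmx : 1 ≤ mx)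
    (PX : Fin (mx + 1) → ℝ) (hPX : IsPMF PX) (hpos : ∀ x, 0 < PX x)
    (hsym : ∀ k : ℕ, extZ PX (((mx / 2 : ℕ) : ℤ) + k) = extZ PX (((mx / 2 : ℕ) : ℤ) - k))
    (hmono : ∀ k : ℕ,
      extZ PX (((mx / 2 : ℕ) : ℤ) + k + 1) ≤ extZ PX (((mx / 2 : ℕ) : ℤ) + k))
    (θs : Fin (ms + 1) → ℝ) (hθs : IsPMF θs)
    (hmin : ∀ θ : Fin (ms + 1) → ℝ, IsPMF θ → iidMI mx ms PX θs ≤ iidMI mx ms PX θ) :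
    (Even ms →
      (∀ k : ℕ, extZ θs (((ms / 2 : ℕ) : ℤ) + k) = extZ θs (((ms / 2 : ℕ) : ℤ) - k)) ∧
      (∀ k : ℕ,
        extZ θs (((ms / 2 : ℕ) : ℤ) + k + 1) ≤ extZ θs (((ms / 2 : ℕ) : ℤ) + k))) ∧
    (Odd ms →
      (∀ k : ℕ, extZ θs (((ms / 2 : ℕ) : ℤ) + k + 1) = extZ θs (((ms / 2 : ℕ) : ℤ) - k)) ∧
      (∀ k : ℕ,
        extZ θs (((ms / 2 : ℕ) : ℤ) - k - 1) ≤ extZ θs (((ms / 2 : ℕ) : ℤ) - k))) := by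
  have hsymm : ∀ s : ℤ, extZ θs (ms - s) = extZ θs s := by
    intro s
    obtain ⟨Q, hG, hM⟩ := main_setup mx ms hmx PX hPX hpos hsym hmono θs hθs hmin
      (Finset.Icc (-(mx : ℤ)) (ms + mx)) (fun s a b => Finset.mem_Icc.mpr ⟨a, b⟩)
    exact min_symm hG (fun t ht => by rw [Finset.mem_Icc] at *; omega) hM s
  have hdec : ∀ s : ℤ, (ms : ℤ) ≤ 2 * s + 1 → extZ θs (s + 1) ≤ extZ θs s := by
    intro s hs
    obtain ⟨Q, hG, hM⟩ := main_setup mx ms hmx PX hPX hpos hsym hmono θs hθs hmin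
      (Finset.Icc (-(mx : ℤ)) (2 * s + 1 + mx))
      (fun s a b => Finset.mem_Icc.mpr ⟨a, by omega⟩)
    have := min_polar hG hs (fun t ht => by rw [Finset.mem_Icc] at *; omega) hM
      (s := s) (by omega)
    rwa [show 2 * s + 1 - s = s + 1 by ring] at this
  constructor
  · rintro ⟨m, hm⟩
    constructor
    · intro k
      rw [← hsymm]
      congr 1
      omega
    · intro k
      exact hdec _ (by omega)
  · rintro ⟨m, hm⟩
    constructor
    · intro k
      rw [← hsymm]
      congr 1
      omega
    · intro k
      rw [← hsymm, ← hsymm (((ms / 2 : ℕ) : ℤ) - k)]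
      have := hdec ((ms : ℤ) - (((ms / 2 : ℕ) : ℤ) - k)) (by omega)
      rwa [show (ms : ℤ) - (((ms / 2 : ℕ) : ℤ) - k) + 1 = ms - (((ms / 2 : ℕ) : ℤ) - k - 1) by
        ring] at this
end SmartMeter
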